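/- arXiv:2512.05460 — 4 statements merged into one kernel-verified Lean document; each statement's English description precedes it below -/
import Mathlib

section
/- Let S be a finite set with |S| = 2k, where k ≥ 1, and let i, j be two distinct elements of S. Consider all pairs (M, σ), where M is a perfect matching of S and σ : S → {−1, +1} is a sign assignment satisfying σ(u) = −σ(v) for every pair {u, v} ∈ M. Then the sum of σ(i)·σ(j) over all such pairs (M, σ), multiplied by (2k − 1), equals the negative of the total number of such pairs (M, σ). Equivalently, the average of σ(i)σ(j) over all such (M, σ) equals −1/(2k − 1). -/
/-- A perfect matching of a finite set `S`: a collection of unordered pairs of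
distinct elements of `S` (sets of cardinality 2) that are pairwise disjoint and
whose union is `S`. -/
def IsPerfectMatchingOf {α : Type*} [DecidableEq α] (S : Finset α)
    (M : Finset (Finset α)) : Prop :=
  (∀ e ∈ M, e.card = 2) ∧
  (∀ e ∈ M, ∀ f ∈ M, e ≠ f → Disjoint e f) ∧
  M.sup id = S

/-- The admissible pairs `(M, σ)`: `M` is a perfect matching of the (whole finite)
ground set and `σ` is a sign assignment (valued in `ℤˣ = {±1}`) giving opposite
signs to the two elements of each pair of `M`. -/
def IsMatchingSignPair {α : Type*} [Fintype α] [DecidableEq α]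
    (p : Finset (Finset α) × (α → ℤˣ)) : Prop :=
  IsPerfectMatchingOf (Finset.univ : Finset α) p.1 ∧
  ∀ e ∈ p.1, ∀ u ∈ e, ∀ v ∈ e, u ≠ v → p.2 u = -p.2 v

theorem msp_balance {α : Type*} [Fintype α] [DecidableEq α]
    (p : Finset (Finset α) × (α → ℤˣ)) (h : IsMatchingSignPair p) :
    ∑ x, (p.2 x : ℤ) = 0 := by
  obtain ⟨⟨h2, hd, hs⟩, hσ⟩ := h
  rw [← hs, Finset.sup_eq_biUnion, Finset.sum_biUnion]
  · refine Finset.sum_eq_zero fun e he => ?_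
    obtain ⟨a, b, hab, rfl⟩ := Finset.card_eq_two.1 (h2 e he)
    have := hσ _ he a (by simp) b (by simp) hab
    simp only [id]
    rw [Finset.sum_pair hab, this]
    simp
  · intro e he f hf hef
    exact hd e he f hf hef

def mspAct {α : Type*} [DecidableEq α] (π : Equiv.Perm α)
    (p : Finset (Finset α) × (α → ℤˣ)) : Finset (Finset α) × (α → ℤˣ) :=
  (p.1.image (fun e => e.image π), fun x => p.2 (π.symm x))

theorem mspAct_symm {α : Type*} [DecidableEq α] (π : Equiv.Perm α)
    (p : Finset (Finset α) × (α → ℤˣ)) : mspAct π.symm (mspAct π p) = p := by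
  simp [mspAct, Finset.image_image, Function.comp_def]

theorem mspAct_isMSP {α : Type*} [Fintype α] [DecidableEq α] (π : Equiv.Perm α)
    (p : Finset (Finset α) × (α → ℤˣ)) (h : IsMatchingSignPair p) :
    IsMatchingSignPair (mspAct π p) := by
  obtain ⟨⟨h2, hd, hs⟩, hσ⟩ := h
  refine ⟨⟨?_, ?_, ?_⟩, ?_⟩
  · simp only [mspAct, Finset.forall_mem_image]
    intro e he
    rw [Finset.card_image_of_injective _ π.injective, h2 e he]
  · simp only [mspAct, Finset.forall_mem_image]
    intro e he f hf hef
    rw [Finset.disjoint_image π.injective]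
    exact hd e he f hf (fun h => hef (by rw [h]))
  · rw [Finset.eq_univ_iff_forall]
    intro x
    have hx : π.symm x ∈ p.1.sup id := by rw [hs]; simp
    rw [Finset.mem_sup] at hx ⊢
    obtain ⟨e, he, hxe⟩ := hx
    exact ⟨e.image π, Finset.mem_image_of_mem _ he,
      Finset.mem_image.2 ⟨_, hxe, by simp⟩⟩
  · simp only [mspAct, Finset.forall_mem_image]
    intro e he u hu v hv huv
    simpa using hσ e he u hu v hv (fun h => huv (by rw [h]))

open scoped Classical in
/-- For a finite set of size `2k` and distinct elements `i, j`, the sum of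
`σ(i)·σ(j)` over all pairs `(M, σ)` of a perfect matching `M` and a compatible
sign assignment `σ`, multiplied by `2k - 1`, equals the negative of the number of
such pairs: the average of `σ(i)σ(j)` is `-1/(2k-1)`. -/
theorem sum_sign_products {α : Type*} [Fintype α] [DecidableEq α]
    (k : ℕ) (hk : 1 ≤ k) (hcard : Fintype.card α = 2 * k)
    (i j : α) (hij : i ≠ j) :
    (∑ p ∈ Finset.univ.filter
        (fun p : Finset (Finset α) × (α → ℤˣ) => IsMatchingSignPair p),
        ((p.2 i : ℤ) * (p.2 j : ℤ))) * (2 * (k : ℤ) - 1) =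
      -((Finset.univ.filter
        (fun p : Finset (Finset α) × (α → ℤˣ) => IsMatchingSignPair p)).card : ℤ) := by
  set F := Finset.univ.filter
        (fun p : Finset (Finset α) × (α → ℤˣ) => IsMatchingSignPair p) with hF
  have hsym : ∀ j' ∈ Finset.univ.erase i,
      ∑ p ∈ F, ((p.2 i : ℤ) * (p.2 j' : ℤ)) = ∑ p ∈ F, ((p.2 i : ℤ) * (p.2 j : ℤ)) := by
    intro j' hj'
    have hj'i : j' ≠ i := Finset.ne_of_mem_erase hj'
    refine Finset.sum_nbij' (mspAct (Equiv.swap j j')) (mspAct (Equiv.swap j j').symm) ?_ ?_ ?_ ?_ ?_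
    · intro p hp
      simp only [hF, Finset.mem_filter, Finset.mem_univ, true_and] at hp ⊢
      exact mspAct_isMSP _ _ hp
    · intro p hp
      simp only [hF, Finset.mem_filter, Finset.mem_univ, true_and] at hp ⊢
      exact mspAct_isMSP _ _ hp
    · intro p _
      exact mspAct_symm _ _
    · intro p _
      exact mspAct_symm (Equiv.swap j j').symm p
    · intro p _
      simp [mspAct, Equiv.swap_apply_of_ne_of_ne hij hj'i.symm]
  have h0 : ∑ x, ∑ p ∈ F, ((p.2 i : ℤ) * (p.2 x : ℤ)) = 0 := by
    rw [Finset.sum_comm]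
    refine Finset.sum_eq_zero fun p hp => ?_
    rw [← Finset.mul_sum, msp_balance p (by simpa [hF] using hp), mul_zero]
  have hii : ∑ p ∈ F, ((p.2 i : ℤ) * (p.2 i : ℤ)) = F.card := by
    simp [← Units.val_mul]
  rw [← Finset.add_sum_erase _ _ (Finset.mem_univ i), hii, Finset.sum_congr rfl hsym,
    Finset.sum_const, Finset.card_erase_of_mem (Finset.mem_univ i), Finset.card_univ, hcard,
    nsmul_eq_mul, Nat.cast_sub (by omega)] at h0
  push_cast at h0
  linarith
end

section
/- Let G be a connected simple graph on a finite vertex set V with |V| = n ≥ 2, with Laplacian matrix L, and let J be the n×n all-ones matrix. Then the matrix L + (1/n)J is invertible, and, writing L† = (L + (1/n)J)⁻¹ − (1/n)J, for any two distinct vertices s, t with b_st = e_s − e_t, the squared biharmonic distance β(s,t) = b_stᵀ (L†)² b_st and the effective resistance R_eff(s,t) = b_stᵀ L† b_st satisfy β(s,t) ≥ (1/2)·R_eff(s,t)². -/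
open Matrix

/-- The `n × n` all-ones matrix `J`. -/
def allOnes (V : Type*) [Fintype V] : Matrix V V ℝ := Matrix.of fun _ _ => 1

/-- The Moore–Penrose pseudoinverse of the Laplacian of `G`,
`L† = (L + (1/n)·J)⁻¹ - (1/n)·J`. -/
noncomputable def lapPinv {V : Type*} [Fintype V] [DecidableEq V]
    (G : SimpleGraph V) [DecidableRel G.Adj] : Matrix V V ℝ :=
  (G.lapMatrix ℝ + ((Fintype.card V : ℝ))⁻¹ • allOnes V)⁻¹
    - ((Fintype.card V : ℝ))⁻¹ • allOnes V

/-- The vector `b_st = e_s - e_t`. -/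
def bvec {V : Type*} [DecidableEq V] (s t : V) : V → ℝ :=
  Pi.single s 1 - Pi.single t 1

/-- For a connected simple graph on `n ≥ 2` vertices with Laplacian `L`, the matrix
`L + (1/n)J` is invertible, and with `L† = (L + (1/n)J)⁻¹ - (1/n)J`, for any two
distinct vertices `s, t`, the squared biharmonic distance
`β(s,t) = b_stᵀ (L†)² b_st` and the effective resistance
`R_eff(s,t) = b_stᵀ L† b_st` satisfy `β(s,t) ≥ (1/2)·R_eff(s,t)²`. -/
theorem biharmonic_ge_half_reff_sq {V : Type*} [Fintype V] [DecidableEq V]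
    (G : SimpleGraph V) [DecidableRel G.Adj] (hconn : G.Connected)
    (hn : 2 ≤ Fintype.card V) (s t : V) (hst : s ≠ t) :
    IsUnit (G.lapMatrix ℝ + ((Fintype.card V : ℝ))⁻¹ • allOnes V) ∧
    (1 / 2) * (bvec s t ⬝ᵥ (lapPinv G *ᵥ bvec s t)) ^ 2 ≤
      bvec s t ⬝ᵥ ((lapPinv G * lapPinv G) *ᵥ bvec s t) := by
  have hn0 : (Fintype.card V : ℝ) ≠ 0 := by
    have : Fintype.card V ≠ 0 := by omega
    exact_mod_cast this
  have hJ : ∀ v : V → ℝ, ∀ i, (allOnes V *ᵥ v) i = ∑ j, v j := by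
    intro v i
    simp [allOnes, Matrix.mulVec, dotProduct]
  have hJs : (allOnes V)ᵀ = allOnes V := by
    ext i j
    simp [allOnes]
  have hLs : (G.lapMatrix ℝ)ᵀ = G.lapMatrix ℝ := SimpleGraph.isSymm_lapMatrix ℝ G
  have hPs : (lapPinv G)ᵀ = lapPinv G := by
    unfold lapPinv
    rw [Matrix.transpose_sub, Matrix.transpose_nonsing_inv, Matrix.transpose_add,
      Matrix.transpose_smul, hJs, hLs]
  constructor
  · rw [← Matrix.mulVec_injective_iff_isUnit]
    intro a b hab
    have hv : (G.lapMatrix ℝ + ((Fintype.card V : ℝ))⁻¹ • allOnes V) *ᵥ (a - b) = 0 := by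
      rw [Matrix.mulVec_sub]
      exact sub_eq_zero.mpr hab
    rw [← sub_eq_zero]
    generalize a - b = v at hv
    rw [Matrix.add_mulVec, Matrix.smul_mulVec] at hv
    have hpt : ∀ i, (G.lapMatrix ℝ *ᵥ v) i + ((Fintype.card V : ℝ))⁻¹ * ∑ j, v j = 0 := by
      intro i
      have := congrFun hv i
      simpa [hJ] using this
    have h1L : ∑ i, (G.lapMatrix ℝ *ᵥ v) i = 0 := by
      have h : (fun _ : V => (1 : ℝ)) ⬝ᵥ (G.lapMatrix ℝ *ᵥ v) = 0 := by
        rw [Matrix.dotProduct_mulVec, ← Matrix.mulVec_transpose, hLs,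
          SimpleGraph.lapMatrix_mulVec_const_eq_zero, zero_dotProduct]
      simpa [dotProduct] using h
    have hS : ∑ j, v j = 0 := by
      have h := Finset.sum_congr rfl (fun i (_ : i ∈ Finset.univ) => hpt i)
      rw [Finset.sum_add_distrib, h1L] at h
      simpa [hn0] using h
    have hL0 : G.lapMatrix ℝ *ᵥ v = 0 := by
      ext i
      have := hpt i
      rw [hS] at this
      simpa using this
    rw [SimpleGraph.lapMatrix_mulVec_eq_zero_iff_forall_reachable] at hL0
    ext i
    have h2 : ∑ j, v j = Fintype.card V * v i := by
      rw [Finset.sum_congr rfl (fun j _ => hL0 j i (hconn.preconnected j i))]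
      simp
    rw [hS] at h2
    simpa [hn0] using h2.symm
  · have hb : bvec s t ⬝ᵥ ((lapPinv G * lapPinv G) *ᵥ bvec s t)
        = (lapPinv G *ᵥ bvec s t) ⬝ᵥ (lapPinv G *ᵥ bvec s t) := by
      rw [← Matrix.mulVec_mulVec, Matrix.dotProduct_mulVec, ← Matrix.mulVec_transpose, hPs]
    rw [hb]
    generalize lapPinv G *ᵥ bvec s t = x
    have h1 : bvec s t ⬝ᵥ x = x s - x t := by
      simp [bvec, sub_dotProduct]
    have h2 : x s * x s + x t * x t ≤ x ⬝ᵥ x := by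
      rw [← Finset.sum_pair (f := fun i => x i * x i) hst]
      exact Finset.sum_le_sum_of_subset_of_nonneg (Finset.subset_univ _)
        (fun i _ _ => mul_self_nonneg (x i))
    rw [h1]
    nlinarith [sq_nonneg (x s + x t)]
end

section
/- Let G be a connected simple graph on a finite vertex set V with |V| = n ≥ 2, with Laplacian matrix L, all-ones matrix J, and L† = (L + (1/n)J)⁻¹ − (1/n)J. For any two distinct vertices s, t with degrees d_s, d_t and b_st = e_s − e_t, the effective resistance satisfies R_eff(s,t) = b_stᵀ L† b_st ≥ (1/2)·(1/d_s + 1/d_t). -/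
open Matrix

lemma aux_allOnes_mulVec {V : Type*} [Fintype V] (x : V → ℝ) :
    allOnes V *ᵥ x = fun _ => ∑ i, x i := by
  ext i
  simp [allOnes, Matrix.mulVec, dotProduct]

lemma aux_sum_lap {V : Type*} [Fintype V] [DecidableEq V]
    (G : SimpleGraph V) [DecidableRel G.Adj] (x : V → ℝ) :
    ∑ i, (G.lapMatrix ℝ *ᵥ x) i = 0 := by
  have h1 : (fun _ => (1:ℝ)) ⬝ᵥ (G.lapMatrix ℝ *ᵥ x) = 0 := by
    rw [Matrix.dotProduct_mulVec, ← Matrix.mulVec_transpose, (G.isSymm_lapMatrix (R := ℝ)).eq,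
      G.lapMatrix_mulVec_const_eq_zero, zero_dotProduct]
  simpa [dotProduct] using h1

lemma aux_sum {V : Type*} [Fintype V] [DecidableEq V]
    (G : SimpleGraph V) [DecidableRel G.Adj] (hn : 2 ≤ Fintype.card V) (x : V → ℝ) :
    ∑ i, ((G.lapMatrix ℝ + ((Fintype.card V : ℝ))⁻¹ • allOnes V) *ᵥ x) i = ∑ i, x i := by
  have h0 : (Fintype.card V : ℝ) ≠ 0 := by
    have : Fintype.card V ≠ 0 := by omega
    exact_mod_cast this
  simp only [Matrix.add_mulVec, Matrix.smul_mulVec, aux_allOnes_mulVec, Pi.add_apply,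
    Finset.sum_add_distrib, aux_sum_lap, Pi.smul_apply, smul_eq_mul, Finset.sum_const,
    Finset.card_univ, nsmul_eq_mul]
  field_simp
  simp

lemma aux_lap {V : Type*} [Fintype V] [DecidableEq V]
    (G : SimpleGraph V) [DecidableRel G.Adj] (x : V → ℝ) (hx : ∑ i, x i = 0) :
    (G.lapMatrix ℝ + ((Fintype.card V : ℝ))⁻¹ • allOnes V) *ᵥ x = G.lapMatrix ℝ *ᵥ x := by
  ext i
  simp [Matrix.add_mulVec, Matrix.smul_mulVec, aux_allOnes_mulVec, hx]

lemma aux_unit {V : Type*} [Fintype V] [DecidableEq V]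
    (G : SimpleGraph V) [DecidableRel G.Adj] (hconn : G.Connected)
    (hn : 2 ≤ Fintype.card V) :
    IsUnit (G.lapMatrix ℝ + ((Fintype.card V : ℝ))⁻¹ • allOnes V) := by
  rw [← Matrix.mulVec_injective_iff_isUnit]
  rw [← Matrix.coe_mulVecLin, ← LinearMap.ker_eq_bot, LinearMap.ker_eq_bot']
  intro x hx
  rw [Matrix.mulVecLin_apply] at hx
  have hs : ∑ i, x i = 0 := by
    rw [← aux_sum G hn x, hx]; simp
  rw [aux_lap G x hs, G.lapMatrix_mulVec_eq_zero_iff_forall_reachable] at hx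
  ext i
  have h2 : ∑ j, x j = Fintype.card V * x i := by
    rw [Finset.sum_congr rfl (fun j _ => hx j i (hconn.preconnected j i))]
    simp
  rw [hs] at h2
  have h0 : (Fintype.card V : ℝ) ≠ 0 := by
    have : Fintype.card V ≠ 0 := by omega
    exact_mod_cast this
  simpa [h0] using h2.symm

lemma aux_quad {V : Type*} [Fintype V] [DecidableEq V]
    (G : SimpleGraph V) [DecidableRel G.Adj] (s t : V) (hst : s ≠ t) (a b : ℝ)
    (ha : 0 ≤ a) (hb : 0 ≤ b) :
    (Pi.single s a - Pi.single t b : V → ℝ) ⬝ᵥ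
      (G.lapMatrix ℝ *ᵥ (Pi.single s a - Pi.single t b)) ≤
    a ^ 2 * G.degree s + b ^ 2 * G.degree t + 2 * a * b := by
  rw [sub_dotProduct, single_dotProduct, single_dotProduct, G.lapMatrix_mulVec_apply,
    G.lapMatrix_mulVec_apply]
  simp only [Pi.sub_apply, Finset.sum_sub_distrib, Pi.single_eq_same,
    Pi.single_eq_of_ne hst, Pi.single_eq_of_ne hst.symm, Pi.single_apply, Finset.sum_ite_eq',
    SimpleGraph.mem_neighborFinset, SimpleGraph.irrefl, if_false, G.adj_comm t s]
  have := mul_nonneg ha hb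
  split_ifs <;> nlinarith

theorem reff_ge_half_inv_degrees {V : Type*} [Fintype V] [DecidableEq V]
    (G : SimpleGraph V) [DecidableRel G.Adj] (hconn : G.Connected)
    (hn : 2 ≤ Fintype.card V) (s t : V) (hst : s ≠ t) :
    (1 / 2) * (1 / (G.degree s : ℝ) + 1 / (G.degree t : ℝ)) ≤
      bvec s t ⬝ᵥ (lapPinv G *ᵥ bvec s t) := by
  have hnt : Nontrivial V := ⟨s, t, hst⟩
  have hs1 : (1:ℝ) ≤ G.degree s := by
    exact_mod_cast hconn.preconnected.degree_pos_of_nontrivial s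
  have ht1 : (1:ℝ) ≤ G.degree t := by
    exact_mod_cast hconn.preconnected.degree_pos_of_nontrivial t
  have hbs : ∑ i, bvec s t i = 0 := by simp [bvec]
  set M := G.lapMatrix ℝ + ((Fintype.card V : ℝ))⁻¹ • allOnes V with hM
  have hu : IsUnit M.det := (Matrix.isUnit_iff_isUnit_det _).1 (aux_unit G hconn hn)
  set y := M⁻¹ *ᵥ bvec s t with hy
  have hMy : M *ᵥ y = bvec s t := by
    rw [hy, Matrix.mulVec_mulVec, Matrix.mul_nonsing_inv _ hu, Matrix.one_mulVec]
  have hys : ∑ i, y i = 0 := by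
    rw [← aux_sum G hn y, ← hM, hMy, hbs]
  have hLy : G.lapMatrix ℝ *ᵥ y = bvec s t := by
    rw [← aux_lap G y hys, ← hM, hMy]
  have hpin : lapPinv G *ᵥ bvec s t = y := by
    ext i
    simp [lapPinv, ← hM, Matrix.sub_mulVec, Matrix.smul_mulVec, aux_allOnes_mulVec, hbs, ← hy]
  rw [hpin]
  set p : ℝ := (G.degree s : ℝ)
  set q : ℝ := (G.degree t : ℝ)
  have hp : 0 < p := by linarith
  have hq : 0 < q := by linarith
  set c : ℝ := (p + q) / (p + q + 2) with hc
  have hc0 : 0 ≤ c := by positivity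
  set x : V → ℝ := Pi.single s (c / p) - Pi.single t (c / q) with hx
  have hxq := aux_quad G s t hst (c / p) (c / q) (by positivity) (by positivity)
  rw [← hx] at hxq
  have hpos := (G.posSemidef_lapMatrix ℝ).dotProduct_mulVec_nonneg (y - x)
  have hsym : y ⬝ᵥ (G.lapMatrix ℝ *ᵥ x) = x ⬝ᵥ bvec s t := by
    rw [Matrix.dotProduct_mulVec, ← Matrix.mulVec_transpose, (G.isSymm_lapMatrix (R := ℝ)).eq,
      hLy, dotProduct_comm]
  have hxb : x ⬝ᵥ bvec s t = c / p + c / q := by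
    rw [hx, sub_dotProduct, single_dotProduct, single_dotProduct]
    simp [bvec, hst, hst.symm]
  rw [star_trivial, Matrix.mulVec_sub, sub_dotProduct, dotProduct_sub, dotProduct_sub, hsym, hLy,
    hxb, dotProduct_comm y] at hpos
  have key : (1 / 2) * (1 / p + 1 / q) ≤
      2 * (c / p + c / q) - ((c / p) ^ 2 * p + (c / q) ^ 2 * q + 2 * (c / p) * (c / q)) := by
    have e : 2 * (c / p + c / q) - ((c / p) ^ 2 * p + (c / q) ^ 2 * q + 2 * (c / p) * (c / q))
        - (1 / 2) * (1 / p + 1 / q) = (p + q) * (p + q - 2) / (2 * p * q * (p + q + 2)) := by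
      rw [hc]; field_simp; ring
    have : 0 ≤ (p + q) * (p + q - 2) / (2 * p * q * (p + q + 2)) := by
      apply div_nonneg
      · apply mul_nonneg <;> linarith
      · positivity
    linarith
  linarith
end

section
/- Let G be a connected simple graph on a finite vertex set V with |V| = n ≥ 2, with Laplacian matrix L, all-ones matrix J, and L† = (L + (1/n)J)⁻¹ − (1/n)J. For any two distinct vertices s, t with degrees d_s, d_t and b_st = e_s − e_t, the squared biharmonic distance satisfies β(s,t) = b_stᵀ (L†)² b_st ≥ (1/8)·(1/d_s + 1/d_t)². -/
open Matrix

lemma row_bound_aux {V : Type*} [Fintype V] [DecidableEq V]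
    (G : SimpleGraph V) [DecidableRel G.Adj] (u : V) (z : V → ℝ)
    (h : ((G.lapMatrix ℝ *ᵥ z) u) ^ 2 = 1) :
    (1 / (G.degree u : ℝ)) ^ 2 ≤ 2 * (z ⬝ᵥ z) := by
  have hzz : z ⬝ᵥ z = ∑ i, z i ^ 2 := by simp [dotProduct, sq]
  rw [SimpleGraph.lapMatrix_mulVec_apply] at h
  have hS : (∑ w ∈ G.neighborFinset u, z w) ^ 2 ≤
      (G.degree u : ℝ) * ∑ w ∈ G.neighborFinset u, z w ^ 2 := by
    have := sq_sum_le_card_mul_sum_sq (s := G.neighborFinset u) (f := z)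
    simpa using this
  have hQ : z u ^ 2 + ∑ w ∈ G.neighborFinset u, z w ^ 2 ≤ ∑ i, z i ^ 2 := by
    rw [← Finset.sum_insert (f := fun i => z i ^ 2) (by simp)]
    exact Finset.sum_le_sum_of_subset_of_nonneg (Finset.subset_univ _)
      (fun _ _ _ => sq_nonneg _)
  have hQ0 : 0 ≤ ∑ w ∈ G.neighborFinset u, z w ^ 2 :=
    Finset.sum_nonneg (fun _ _ => sq_nonneg _)
  rw [hzz]
  rcases Nat.eq_zero_or_pos (G.degree u) with h0 | h0
  · rw [h0]
    have : 0 ≤ ∑ i, z i ^ 2 := Finset.sum_nonneg (fun _ _ => sq_nonneg _)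
    simpa using this
  have hd : (1 : ℝ) ≤ G.degree u := by exact_mod_cast h0
  generalize (G.degree u : ℝ) = d at *
  generalize (∑ w ∈ G.neighborFinset u, z w ^ 2) = Q at *
  generalize (∑ w ∈ G.neighborFinset u, z w) = S at *
  generalize (∑ i, z i ^ 2) = N at *
  generalize z u = x at *
  rw [div_pow, one_pow, div_le_iff₀ (by positivity)]
  have h1 : d ^ 2 * (x ^ 2 + Q) ≤ d ^ 2 * N := mul_le_mul_of_nonneg_left hQ (sq_nonneg d)
  have h2 : d * Q ≤ d ^ 2 * Q := mul_le_mul_of_nonneg_right (by nlinarith) hQ0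
  nlinarith [sq_nonneg (d * x + S)]

lemma sum_lap_aux {V : Type*} [Fintype V] [DecidableEq V]
    (G : SimpleGraph V) [DecidableRel G.Adj] (v : V → ℝ) :
    ∑ i, (G.lapMatrix ℝ *ᵥ v) i = 0 := by
  have h : (1 : V → ℝ) ⬝ᵥ (G.lapMatrix ℝ *ᵥ v) = 0 := by
    rw [dotProduct_mulVec, ← mulVec_transpose, (G.isSymm_lapMatrix (R := ℝ)).eq]
    have := G.lapMatrix_mulVec_const_eq_zero (R := ℝ)
    rw [show (1 : V → ℝ) = fun _ => 1 from rfl, this, zero_dotProduct]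
  simpa [dotProduct] using h

lemma allOnes_mulVec_aux {V : Type*} [Fintype V] (c : ℝ) (v : V → ℝ) :
    (c • allOnes V) *ᵥ v = fun _ => c * ∑ i, v i := by
  ext i
  simp [allOnes, mulVec, dotProduct, Finset.mul_sum]

lemma sum_M_aux {V : Type*} [Fintype V] [DecidableEq V]
    (G : SimpleGraph V) [DecidableRel G.Adj] (hn : 2 ≤ Fintype.card V) (v : V → ℝ) :
    ∑ i, ((G.lapMatrix ℝ + ((Fintype.card V : ℝ))⁻¹ • allOnes V) *ᵥ v) i = ∑ i, v i := by
  have hc : (Fintype.card V : ℝ) ≠ 0 := by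
    have : Fintype.card V ≠ 0 := by omega
    exact_mod_cast this
  simp only [add_mulVec, Pi.add_apply, Finset.sum_add_distrib, sum_lap_aux, allOnes_mulVec_aux]
  simp [hc]

/-- For a connected simple graph on `n ≥ 2` vertices and distinct vertices `s, t`
with degrees `d_s, d_t`, the squared biharmonic distance
`β(s,t) = b_stᵀ (L†)² b_st` satisfies `β(s,t) ≥ (1/8)(1/d_s + 1/d_t)²`. -/
theorem biharmonic_ge_eighth_inv_degrees_sq {V : Type*} [Fintype V] [DecidableEq V]
    (G : SimpleGraph V) [DecidableRel G.Adj] (hconn : G.Connected)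
    (hn : 2 ≤ Fintype.card V) (s t : V) (hst : s ≠ t) :
    (1 / 8) * (1 / (G.degree s : ℝ) + 1 / (G.degree t : ℝ)) ^ 2 ≤
      bvec s t ⬝ᵥ ((lapPinv G * lapPinv G) *ᵥ bvec s t) := by
  have hc : (Fintype.card V : ℝ) ≠ 0 := by
    have : Fintype.card V ≠ 0 := by omega
    exact_mod_cast this
  have hb : ∑ i, bvec s t i = 0 := by simp [bvec, Finset.sum_sub_distrib]
  set M := G.lapMatrix ℝ + ((Fintype.card V : ℝ))⁻¹ • allOnes V with hM
  have hMv : ∀ v : V → ℝ, ∑ i, v i = 0 → M *ᵥ v = G.lapMatrix ℝ *ᵥ v := by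
    intro v hv
    rw [hM, add_mulVec, allOnes_mulVec_aux, hv]
    ext i
    simp
  have hunit : IsUnit M := by
    rw [← Matrix.mulVec_injective_iff_isUnit]
    refine (injective_iff_map_eq_zero (Matrix.mulVecLin M)).2 ?_
    intro v hv
    rw [Matrix.mulVecLin_apply] at hv
    have h0 : ∑ i, v i = 0 := by
      rw [← sum_M_aux G hn v, ← hM, hv]; simp
    rw [hMv v h0, SimpleGraph.lapMatrix_mulVec_eq_zero_iff_forall_reachable] at hv
    ext i
    have h1 : ∑ j, v j = ∑ _j : V, v i :=
      Finset.sum_congr rfl (fun j _ => hv j i (hconn.preconnected j i))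
    rw [h0] at h1
    simp at h1
    rcases h1 with h1 | h1
    · omega
    · exact h1
  have hdet : IsUnit M.det := (Matrix.isUnit_iff_isUnit_det M).1 hunit
  have hJs : (allOnes V)ᵀ = allOnes V := by ext; simp [allOnes]
  have hMs : Mᵀ = M := by
    rw [hM, transpose_add, transpose_smul, hJs, (G.isSymm_lapMatrix (R := ℝ)).eq]
  have hPs : (lapPinv G)ᵀ = lapPinv G := by
    unfold lapPinv
    rw [← hM, transpose_sub, transpose_smul, hJs, transpose_nonsing_inv, hMs]
  have hMz : M *ᵥ (M⁻¹ *ᵥ bvec s t) = bvec s t := by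
    rw [mulVec_mulVec, Matrix.mul_nonsing_inv _ hdet, one_mulVec]
  have hP : lapPinv G *ᵥ bvec s t = M⁻¹ *ᵥ bvec s t := by
    unfold lapPinv
    rw [← hM, sub_mulVec, allOnes_mulVec_aux, hb]
    ext i
    simp
  rw [← mulVec_mulVec, dotProduct_mulVec, ← mulVec_transpose, hPs, hP]
  generalize M⁻¹ *ᵥ bvec s t = z at *
  have hz : ∑ i, z i = 0 := by
    rw [← sum_M_aux G hn z, ← hM, hMz, hb]
  rw [hMv z hz] at hMz
  have h1 := row_bound_aux G s z (by rw [hMz]; simp [bvec, hst])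
  have h2 := row_bound_aux G t z (by rw [hMz]; simp [bvec, hst.symm])
  nlinarith [sq_nonneg (1 / (G.degree s : ℝ) - 1 / (G.degree t : ℝ))]
end
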